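/- Let A be a unital C*-algebra, B a unital C*-subalgebra, and suppose every pure state of B has a unique state extension to A. Then there is at most one conditional expectation from A onto B. -/

import Mathlib

/-!
Composing a state `φ` of `B` with a conditional expectation onto `B` gives a state of `A`
extending `φ`; positivity survives the passage to `B` because positive elements of `B` have
their square roots in `B`. When `φ` is pure, uniqueness of the extension shows that `φ` does not
distinguish `E₁ a` from `E₂ a`. Pure states separate the points of `B`: states do, by separating
a self-adjoint element from the closed positive cone, and every state is a weak-* limit of
convex combinations of pure states by Krein–Milman, the state space being weak-* compact and
convex.
-/

open scoped ComplexOrder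
noncomputable section

variable {A : Type*} [NormedRing A] [StarRing A] [CStarRing A] [NormedAlgebra ℂ A]
  [CompleteSpace A] [StarModule ℂ A]

/-- A state on a unital C*-algebra: a positive linear functional sending 1 to 1. -/
def IsState {A : Type*} [Ring A] [StarRing A] [Algebra ℂ A] (g : A →ₗ[ℂ] ℂ) : Prop :=
  g 1 = 1 ∧ ∀ a : A, 0 ≤ g (star a * a)

/-- A pure state: a state that is an extreme point of the state space. -/
def IsPureState {A : Type*} [Ring A] [StarRing A] [Algebra ℂ A] (g : A →ₗ[ℂ] ℂ) : Prop :=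
  IsState g ∧ ∀ g₁ g₂ : A →ₗ[ℂ] ℂ, IsState g₁ → IsState g₂ →
    g = (2:ℂ)⁻¹ • g₁ + (2:ℂ)⁻¹ • g₂ → g₁ = g₂

/-- The inclusion of a star subalgebra as a linear map. -/
def inclL (B : StarSubalgebra ℂ A) : B →ₗ[ℂ] A where
  toFun := (↑)
  map_add' _ _ := rfl
  map_smul' _ _ := rfl

/-- A conditional expectation onto a subalgebra `B`: a unital positive contractive linear
projection of `A` onto `B`. -/
def IsCondExp (B : StarSubalgebra ℂ A) (E : A →L[ℂ] A) : Prop :=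
  (∀ a : A, E a ∈ B) ∧ (∀ b ∈ B, E b = b) ∧
    (∀ a : A, ∃ c : A, E (star a * a) = star c * c) ∧ ‖E‖ = 1

section States

variable {C : Type*} [Ring C] [StarRing C] [Algebra ℂ C] {f : C →ₗ[ℂ] ℂ}

lemma IsState.map_nonneg [PartialOrder C] [StarOrderedRing C] (hf : IsState f) {a : C}
    (ha : 0 ≤ a) : 0 ≤ f a := by
  rw [StarOrderedRing.nonneg_iff] at ha
  induction ha using AddSubmonoid.closure_induction with
  | mem x hx => obtain ⟨b, rfl⟩ := hx; exact hf.2 b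
  | zero => rw [map_zero]
  | add x y _ _ hx hy => rw [map_add]; exact add_nonneg hx hy

lemma isState_inv_smul (hpos : ∀ a, 0 ≤ f (star a * a)) (hone : f 1 ≠ 0) :
    IsState ((f 1)⁻¹ • f) := by
  have hone_nonneg : 0 ≤ f 1 := by simpa only [star_one, one_mul] using hpos 1
  exact ⟨inv_mul_cancel₀ hone, fun a ↦ mul_nonneg (inv_nonneg.mpr hone_nonneg) (hpos a)⟩

end States

section HermitianExtension

variable {V : Type*} [AddCommGroup V] [Module ℂ V] [StarAddMonoid V] [StarModule ℂ V]

/-- The complex-linear functional that agrees with the real-linear functional `f` on self-adjoint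
elements. The values of `f` off the self-adjoint part are discarded, so `f` need not be the real
part of the result. -/
def hermitianExtension (f : Module.Dual ℝ V) : Module.Dual ℂ V :=
  Module.Dual.extendRCLike
    { toFun a := f (realPart a)
      map_add' a b := by simp
      map_smul' r a := by simp }

lemma hermitianExtension_apply_of_isSelfAdjoint (f : Module.Dual ℝ V) {a : V}
    (ha : IsSelfAdjoint a) : hermitianExtension f a = f a := by
  simp [hermitianExtension, Module.Dual.extendRCLike_apply, ha.imaginaryPart, ha.coe_realPart]

end HermitianExtension

section Separation

variable {C : Type*} [CStarAlgebra C]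

lemma nonneg_of_forall_isState [PartialOrder C] [StarOrderedRing C] {a : C}
    (ha : IsSelfAdjoint a) (h : ∀ f : C →ₗ[ℂ] ℂ, IsState f → 0 ≤ f a) : 0 ≤ a := by
  by_contra hneg
  obtain ⟨g, hg_nonneg, hga⟩ := (ProperCone.positive ℝ C).hyperplane_separation_point hneg
  have hg_one : 0 < g 1 := by
    have hle : 0 ≤ g (a + algebraMap ℝ C ‖a‖) :=
      hg_nonneg _ (neg_le_iff_add_nonneg.mp ha.neg_algebraMap_norm_le_self)
    rw [Algebra.algebraMap_eq_smul_one, map_add, map_smul, smul_eq_mul] at hle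
    exact pos_of_mul_pos_right (by linarith) (norm_nonneg a)
  let f := hermitianExtension g.toLinearMap
  have hf_apply {b : C} (hb : IsSelfAdjoint b) : f b = (g b : ℂ) :=
    hermitianExtension_apply_of_isSelfAdjoint _ hb
  have hf_one : f 1 = (g 1 : ℂ) := hf_apply (.one C)
  have hf : IsState ((f 1)⁻¹ • f) := by
    refine isState_inv_smul (fun b ↦ ?_) (by rw [hf_one]; exact_mod_cast hg_one.ne')
    rw [hf_apply (.star_mul_self b)]
    exact_mod_cast hg_nonneg _ (star_mul_self_nonneg b)
  have hfa : 0 ≤ (g 1)⁻¹ * g a := by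
    have := h _ hf
    rw [LinearMap.smul_apply, hf_one, hf_apply ha, smul_eq_mul] at this
    exact_mod_cast this
  exact hfa.not_gt (mul_neg_of_pos_of_neg (inv_pos.mpr hg_one) hga)

lemma IsState.map_star {f : C →ₗ[ℂ] ℂ} (hf : IsState f) (a : C) : f (star a) = star (f a) := by
  let _ := CStarAlgebra.spectralOrder C
  have := CStarAlgebra.spectralOrderedRing C
  exact StarHomClass.map_star (PositiveLinearMap.mk₀ f fun _ ↦ hf.map_nonneg) a

lemma eq_zero_of_forall_isState {a : C} (h : ∀ f : C →ₗ[ℂ] ℂ, IsState f → f a = 0) : a = 0 := by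
  let _ := CStarAlgebra.spectralOrder C
  have := CStarAlgebra.spectralOrderedRing C
  have realPart_eq_zero {b : C} (hb : ∀ f : C →ₗ[ℂ] ℂ, IsState f → f b = 0) :
      (realPart b : C) = 0 := by
    have hzero (f : C →ₗ[ℂ] ℂ) (hf : IsState f) : f (realPart b) = 0 := by
      rw [realPart_apply_coe, LinearMap.map_smul_of_tower, map_add, hf.map_star, hb f hf, star_zero,
        add_zero, smul_zero]
    refine le_antisymm (neg_nonneg.mp ?_) ?_
    · exact nonneg_of_forall_isState (realPart b).2.neg fun f hf ↦ by
        rw [map_neg, hzero f hf, neg_zero]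
    · exact nonneg_of_forall_isState (realPart b).2 fun f hf ↦ (hzero f hf).ge
  have hre : (realPart a : C) = 0 := realPart_eq_zero h
  have him : (imaginaryPart a : C) = 0 := by
    have := realPart_eq_zero (b := Complex.I • a) fun f hf ↦ by rw [map_smul, h f hf, smul_zero]
    rwa [realPart_I_smul, NegMemClass.coe_neg, neg_eq_zero] at this
  rw [← realPart_add_I_smul_imaginaryPart a, hre, him, smul_zero, add_zero]

end Separation

section Norm

variable {C : Type*} [CStarAlgebra C]

lemma norm_positiveLinearMap_apply_le [PartialOrder C] [StarOrderedRing C] (f : C →ₚ[ℂ] ℂ) (a : C) :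
    ‖f a‖ ≤ ‖f 1‖ * ‖a‖ := by
  let ξ := f.toPreGNS 1
  have hξ : ‖ξ‖ * ‖ξ‖ = ‖f 1‖ := by
    have hsq : ((‖ξ‖ ^ 2 : ℝ) : ℂ) = f 1 := by simp [f.preGNS_norm_sq, ξ]
    rw [← sq, ← hsq, Complex.norm_real, norm_pow, norm_norm]
  calc ‖f a‖ = ‖inner ℂ ξ (f.leftMulMapPreGNS a ξ)‖ := by
        simp [f.preGNS_inner_def, ξ]
    _ ≤ ‖ξ‖ * ‖f.leftMulMapPreGNS a ξ‖ := norm_inner_le_norm _ _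
    _ ≤ ‖ξ‖ * (‖a‖ * ‖ξ‖) := by
        gcongr
        exact (f.leftMulMapPreGNS a).le_of_opNorm_le
          (LinearMap.mkContinuous_norm_le _ (norm_nonneg a) _) ξ
    _ = ‖f 1‖ * ‖a‖ := by rw [← hξ]; ring

lemma IsState.norm_apply_le {f : C →ₗ[ℂ] ℂ} (hf : IsState f) (a : C) : ‖f a‖ ≤ ‖a‖ := by
  let _ := CStarAlgebra.spectralOrder C
  have := CStarAlgebra.spectralOrderedRing C
  have := norm_positiveLinearMap_apply_le (PositiveLinearMap.mk₀ f fun _ ↦ hf.map_nonneg) a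
  change ‖f a‖ ≤ ‖f 1‖ * ‖a‖ at this
  rwa [hf.1, norm_one, one_mul] at this

end Norm

section StateSpace

lemma closure_convexHull_extremePoints_weakDual {𝕜 E : Type*} [RCLike 𝕜] [AddCommGroup E]
    [TopologicalSpace E] [Module 𝕜 E] {s : Set (WeakDual 𝕜 E)} (hs : IsCompact s)
    (hc : Convex ℝ s) : closure (convexHull ℝ (s.extremePoints ℝ)) = s := by
  have : LocallyConvexSpace ℝ (WeakDual 𝕜 E) :=
    inferInstanceAs (LocallyConvexSpace ℝ (WeakBilin (topDualPairing 𝕜 E)))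
  exact closure_convexHull_extremePoints hs hc

lemma weakDual_apply_eq_of_mem_closure_convexHull {𝕜 E : Type*} [RCLike 𝕜] [AddCommGroup E]
    [TopologicalSpace E] [Module 𝕜 E] {s : Set (WeakDual 𝕜 E)} {x y : E}
    (hs : ∀ g ∈ s, g x = g y) {f : WeakDual 𝕜 E} (hf : f ∈ closure (convexHull ℝ s)) :
    f x = f y := by
  have hclosed : IsClosed {g : WeakDual 𝕜 E | g x = g y} :=
    isClosed_eq (WeakDual.eval_continuous x) (WeakDual.eval_continuous y)
  have hconvex : Convex ℝ {g : WeakDual 𝕜 E | g x = g y} := by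
    intro g hg k hk r t _ _ _
    change r • g x + t • k x = r • g y + t • k y
    rw [show g x = g y from hg, show k x = k y from hk]
  have hsub : closure (convexHull ℝ s) ⊆ {g | g x = g y} :=
    closure_minimal (convexHull_min hs hconvex) hclosed
  exact hsub hf

/-- The continuous states of `C`, as a subset of the weak dual. -/
def stateSpace (C : Type*) [Ring C] [StarRing C] [Algebra ℂ C] [TopologicalSpace C] :
    Set (WeakDual ℂ C) :=
  {f | IsState (WeakDual.toStrongDual f).toLinearMap}

lemma isClosed_stateSpace (C : Type*) [Ring C] [StarRing C] [Algebra ℂ C] [TopologicalSpace C] :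
    IsClosed (stateSpace C) := by
  have h : stateSpace C = {f | f 1 = 1} ∩ ⋂ a : C, {f | 0 ≤ f (star a * a)} := by
    ext f; simp [stateSpace, IsState]
  rw [h]
  exact (isClosed_eq (WeakDual.eval_continuous 1) continuous_const).inter <|
    isClosed_iInter fun a ↦ isClosed_le continuous_const (WeakDual.eval_continuous (star a * a))

lemma convex_stateSpace (C : Type*) [Ring C] [StarRing C] [Algebra ℂ C] [TopologicalSpace C] :
    Convex ℝ (stateSpace C) := by
  intro f hf g hg s t hs ht hst
  refine ⟨?_, fun a ↦ ?_⟩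
  · change s • f 1 + t • g 1 = 1
    rw [show f 1 = 1 from hf.1, show g 1 = 1 from hg.1, ← add_smul, hst, one_smul]
  · exact add_nonneg (smul_nonneg hs (hf.2 a)) (smul_nonneg ht (hg.2 a))

variable {C : Type*} [CStarAlgebra C]

lemma isCompact_stateSpace : IsCompact (stateSpace C) := by
  refine (WeakDual.isCompact_closedBall 0 1).of_isClosed_subset (isClosed_stateSpace C)
    fun f hf ↦ ?_
  rw [Set.mem_preimage, mem_closedBall_zero_iff]
  refine ContinuousLinearMap.opNorm_le_bound _ zero_le_one fun a ↦ ?_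
  rw [one_mul]
  exact IsState.norm_apply_le hf a

/-- A state of a C*-algebra, which is automatically continuous, as an element of the weak dual. -/
def IsState.toWeakDual {f : C →ₗ[ℂ] ℂ} (hf : IsState f) : WeakDual ℂ C :=
  StrongDual.toWeakDual <| f.mkContinuous 1 fun a ↦ by
    rw [one_mul]; exact hf.norm_apply_le a

lemma IsState.toWeakDual_mem_stateSpace {f : C →ₗ[ℂ] ℂ} (hf : IsState f) :
    hf.toWeakDual ∈ stateSpace C := hf

lemma isPureState_of_mem_extremePoints {f : WeakDual ℂ C}
    (hf : f ∈ (stateSpace C).extremePoints ℝ) :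
    IsPureState (WeakDual.toStrongDual f).toLinearMap := by
  refine ⟨hf.1, fun g₁ g₂ hg₁ hg₂ hmid ↦ ?_⟩
  have hseg : f ∈ openSegment ℝ hg₁.toWeakDual hg₂.toWeakDual := by
    refine ⟨2⁻¹, 2⁻¹, by norm_num, by norm_num, by norm_num, DFunLike.ext _ _ fun a ↦ ?_⟩
    change (2⁻¹ : ℝ) • g₁ a + (2⁻¹ : ℝ) • g₂ a = f a
    rw [show f a = _ from LinearMap.congr_fun hmid a]
    simp
  obtain ⟨h₁, h₂⟩ := (mem_extremePoints.mp hf).2 _ hg₁.toWeakDual_mem_stateSpace _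
    hg₂.toWeakDual_mem_stateSpace hseg
  ext a
  exact DFunLike.congr_fun (h₁.trans h₂.symm) a

lemma eq_of_forall_isPureState {a b : C} (h : ∀ f : C →ₗ[ℂ] ℂ, IsPureState f → f a = f b) :
    a = b := by
  refine sub_eq_zero.mp (eq_zero_of_forall_isState fun f hf ↦ ?_)
  have hmem : hf.toWeakDual ∈ closure (convexHull ℝ ((stateSpace C).extremePoints ℝ)) := by
    rw [closure_convexHull_extremePoints_weakDual isCompact_stateSpace (convex_stateSpace C)]
    exact hf.toWeakDual_mem_stateSpace
  have hab : f a = f b := weakDual_apply_eq_of_mem_closure_convexHull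
    (fun g hg ↦ h _ (isPureState_of_mem_extremePoints hg)) hmem
  rw [map_sub, hab, sub_self]

end StateSpace

lemma exists_mem_star_mul_self_eq {C : Type*} [CStarAlgebra C] {B : StarSubalgebra ℂ C}
    [IsClosed (B : Set C)] {c : C} (hc : star c * c ∈ B) : ∃ d ∈ B, star d * d = star c * c := by
  let _ := CStarAlgebra.spectralOrder C
  have := CStarAlgebra.spectralOrderedRing C
  have hpos : 0 ≤ star c * c := star_mul_self_nonneg c
  refine ⟨CFC.sqrt (star c * c), ?_, ?_⟩
  · rw [CFC.sqrt_eq_real_sqrt _ hpos]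
    exact cfcₙ_mem (𝕜' := ℂ) Real.sqrt hc
  · rw [(CFC.sqrt_nonneg (star c * c)).isSelfAdjoint.star_eq, CFC.sqrt_mul_sqrt_self _ hpos]

namespace IsCondExp

section

variable {C : Type*} [NormedRing C] [StarRing C] [NormedAlgebra ℂ C] [StarModule ℂ C]
  {B : StarSubalgebra ℂ C} {E : C →L[ℂ] C}

lemma isClosed (h : IsCondExp B E) : IsClosed (B : Set C) := by
  have hfix : (B : Set C) = {a | E a = a} :=
    Set.ext fun a ↦ ⟨h.2.1 a, fun ha : E a = a ↦ ha ▸ h.1 a⟩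
  rw [hfix]
  exact isClosed_eq E.continuous continuous_id

/-- A conditional expectation onto `B`, with codomain restricted to `B`. -/
def toLinearMap (h : IsCondExp B E) : C →ₗ[ℂ] B :=
  E.toLinearMap.codRestrict B.toSubmodule h.1

lemma toLinearMap_comp_inclL (h : IsCondExp B E) :
    h.toLinearMap ∘ₗ inclL B = LinearMap.id :=
  LinearMap.ext fun b ↦ Subtype.ext (h.2.1 b b.2)

end

lemma isState_comp {C : Type*} [CStarAlgebra C] {B : StarSubalgebra ℂ C} {E : C →L[ℂ] C}
    (h : IsCondExp B E) {φ : B →ₗ[ℂ] ℂ} (hφ : IsState φ) : IsState (φ ∘ₗ h.toLinearMap) := by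
  have := h.isClosed
  refine ⟨?_, fun a ↦ ?_⟩
  · have hone : h.toLinearMap 1 = 1 := Subtype.ext (h.2.1 1 (one_mem B))
    rw [LinearMap.comp_apply, hone, hφ.1]
  · obtain ⟨c, hc⟩ := h.2.2.1 a
    obtain ⟨d, hdB, hd⟩ := exists_mem_star_mul_self_eq (hc ▸ h.1 (star a * a))
    have hEa : h.toLinearMap (star a * a) = star (⟨d, hdB⟩ : B) * ⟨d, hdB⟩ :=
      Subtype.ext (hc.trans hd.symm)
    rw [LinearMap.comp_apply, hEa]
    exact hφ.2 _

end IsCondExp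

/-- If every pure state of `B` extends uniquely to a state of `A`, then there is at most one
conditional expectation of `A` onto `B`. -/
theorem condExp_unique_of_unique_pure_state_extension
    (B : StarSubalgebra ℂ A)
    (hext : ∀ φ : B →ₗ[ℂ] ℂ, IsPureState φ →
      ∃! ψ : A →ₗ[ℂ] ℂ, IsState ψ ∧ ψ.comp (inclL B) = φ)
    (E₁ E₂ : A →L[ℂ] A) (h₁ : IsCondExp B E₁) (h₂ : IsCondExp B E₂) :
    E₁ = E₂ := by
  let _ : CStarAlgebra A := {}
  have := h₁.isClosed
  have hstate {E : A →L[ℂ] A} (h : IsCondExp B E) {φ : B →ₗ[ℂ] ℂ} (hφ : IsPureState φ) :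
      IsState (φ ∘ₗ h.toLinearMap) ∧ (φ ∘ₗ h.toLinearMap) ∘ₗ inclL B = φ :=
    ⟨h.isState_comp hφ.1, by rw [LinearMap.comp_assoc, h.toLinearMap_comp_inclL, LinearMap.comp_id]⟩
  ext a
  have hE : h₁.toLinearMap a = h₂.toLinearMap a := eq_of_forall_isPureState fun φ hφ ↦
    LinearMap.congr_fun ((hext φ hφ).unique (hstate h₁ hφ) (hstate h₂ hφ)) a
  exact congrArg Subtype.val hE
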